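/- Grade ℂ[b,t,k] by deg b = deg t = 1 and deg k = 2, so that u_{n+1}, v_{n+1}, w_{n+1} are homogeneous of degrees n+2, n+1 and n respectively. Then for every n ≥ 1 the Hilbert series of the graded quotient satisfies (1−T)²·(1−T²) · Σ_{p≥0} dim_ℂ( (ℂ[b,t,k]/(u_{n+1},v_{n+1},w_{n+1}))_p ) · T^p = (1−Tⁿ)(1−T^{n+1})(1−T^{n+2}) in ℤ[[T]]. -/

import Mathlib

open MvPolynomial

noncomputable section

/-- `ℂ[b,t,k]`, with variables `0 = b`, `1 = t`, `2 = k`. -/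
abbrev R3 : Type := MvPolynomial (Fin 3) ℂ

/-- The weights: `deg b = deg t = 1`, `deg k = 2`. -/
def w3 : Fin 3 → ℕ := ![1, 1, 2]

/-- The 3×3 matrix `A` with rows `(b,0,0)`, `(1,0,k)`, `(0,1,t)`. -/
def A3 : Matrix (Fin 3) (Fin 3) R3 :=
  !![X 0, 0, 0;
     1, 0, X 2;
     0, 1, X 1]

/-- `G₁ = (b(2b−t), 2b−t, 2)ᵀ`. -/
def G1 : Fin 3 → R3 := ![X 0 * (2 * X 0 - X 1), 2 * X 0 - X 1, 2]

/-- `G_{n+1} = Aⁿ·G₁`, with components `u_{n+1}, v_{n+1}, w_{n+1}`. -/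
def G (n : ℕ) : Fin 3 → R3 := (A3 ^ n).mulVec G1

/-- The degree-`p` homogeneous component of the graded quotient
`ℂ[b,t,k]/(u_{n+1},v_{n+1},w_{n+1})`: the image of the space of weighted-homogeneous
polynomials of degree `p` under the quotient map. -/
def comp3 (n p : ℕ) : Submodule ℂ (R3 ⧸ Ideal.span {G n 0, G n 1, G n 2}) :=
  (weightedHomogeneousSubmodule ℂ w3 p).map
    (Ideal.Quotient.mkₐ ℂ (Ideal.span {G n 0, G n 1, G n 2})).toLinearMap

section GradedQuotient

variable {K S : Type*} [Field K] [CommRing S] [Algebra K S]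

/-- The image of the `p`-th graded piece of `S` in `S ⧸ I`. -/
def quotientPiece (𝒜 : ℕ → Submodule K S) (I : Ideal S) (p : ℕ) : Submodule K (S ⧸ I) :=
  (𝒜 p).map (Ideal.Quotient.mkₐ K I).toLinearMap

/-- The Hilbert series of `S ⧸ I` with respect to the grading `𝒜` of `S`. -/
def quotientHilbertSeries (𝒜 : ℕ → Submodule K S) (I : Ideal S) : PowerSeries ℤ :=
  PowerSeries.mk fun p => (Module.finrank K (quotientPiece 𝒜 I p) : ℤ)

variable {𝒜 : ℕ → Submodule K S} {I J : Ideal S} {f : S} {d : ℕ}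

theorem quotientPiece_map_factor (h : I ≤ J) (q : ℕ) :
    (quotientPiece 𝒜 I q).map (Ideal.Quotient.factorₐ K h).toLinearMap = quotientPiece 𝒜 J q := by
  rw [quotientPiece, quotientPiece, ← Submodule.map_comp]
  rfl

theorem finrank_quotientPiece_add [∀ p, Module.Finite K (𝒜 p)] (h : I ≤ J) (q : ℕ) :
    Module.finrank K (quotientPiece 𝒜 J q) +
      Module.finrank K (quotientPiece 𝒜 I q ⊓
        LinearMap.ker (Ideal.Quotient.factorₐ K h).toLinearMap : Submodule K (S ⧸ I)) =
      Module.finrank K (quotientPiece 𝒜 I q) := by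
  have : Module.Finite K (quotientPiece 𝒜 I q) := by
    unfold quotientPiece; infer_instance
  have key := LinearMap.finrank_range_add_finrank_ker
    ((Ideal.Quotient.factorₐ K h).toLinearMap.domRestrict (quotientPiece 𝒜 I q))
  rw [LinearMap.range_domRestrict, quotientPiece_map_factor, LinearMap.ker_domRestrict] at key
  rw [← key, ← Submodule.map_comap_subtype,
    LinearEquiv.finrank_eq (Submodule.equivSubtypeMap _ _)]

theorem mem_or_exists_sub_mul_mem_of_mem_sup [GradedAlgebra 𝒜] (hI : I.IsHomogeneous 𝒜) (hf : f ∈ 𝒜 d) {q : ℕ}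
    {a : S} (ha : a ∈ 𝒜 q) (haJ : a ∈ I ⊔ Ideal.span {f}) :
    (q < d ∧ a ∈ I) ∨ (d ≤ q ∧ ∃ y ∈ 𝒜 (q - d), a - f * y ∈ I) := by
  obtain ⟨y, i, hi, rfl⟩ : ∃ y, ∃ i ∈ I, f * y + i = a := by
    rw [sup_comm, Ideal.mem_span_singleton_sup] at haJ
    obtain ⟨y, i, hi, h⟩ := haJ
    exact ⟨y, i, hi, by rw [mul_comm]; exact h⟩
  have hdec := DirectSum.decompose_of_mem_same 𝒜 ha
  rw [DirectSum.decompose_add, DirectSum.add_apply, Submodule.coe_add] at hdec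
  have hiq := hI q hi
  rcases lt_or_ge q d with h | h
  · refine Or.inl ⟨h, ?_⟩
    rw [DirectSum.coe_decompose_mul_of_left_mem_of_not_le 𝒜 hf (not_le.2 h), zero_add] at hdec
    rwa [← hdec]
  · refine Or.inr ⟨h, DirectSum.decompose 𝒜 y (q - d), SetLike.coe_mem _, ?_⟩
    rw [DirectSum.coe_decompose_mul_of_left_mem_of_le 𝒜 hf h] at hdec
    rwa [← hdec, add_sub_cancel_left]

theorem quotientHilbertSeries_sup_span_singleton [GradedAlgebra 𝒜] [∀ p, Module.Finite K (𝒜 p)]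
    (hI : I.IsHomogeneous 𝒜) (hf : f ∈ 𝒜 d) (hreg : ∀ x, f * x ∈ I → x ∈ I) :
    quotientHilbertSeries 𝒜 (I ⊔ Ideal.span {f}) =
      (1 - PowerSeries.X ^ d) * quotientHilbertSeries 𝒜 I := by
  have hle : I ≤ I ⊔ Ideal.span {f} := le_sup_left
  ext q
  have hadd := finrank_quotientPiece_add (𝒜 := 𝒜) hle q
  rw [sub_mul, one_mul, map_sub, PowerSeries.coeff_X_pow_mul']
  simp only [quotientHilbertSeries, PowerSeries.coeff_mk]
  suffices H : Module.finrank K (quotientPiece 𝒜 I q ⊓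
        LinearMap.ker (Ideal.Quotient.factorₐ K hle).toLinearMap : Submodule K (S ⧸ I)) =
      if d ≤ q then Module.finrank K (quotientPiece 𝒜 I (q - d)) else 0 by
    rw [H] at hadd
    rw [← hadd]
    split_ifs <;> simp
  split_ifs with h
  · set m := LinearMap.mulLeft K (Ideal.Quotient.mk I f) with hm
    have hinj : Function.Injective m := by
      rw [← LinearMap.ker_eq_bot, LinearMap.ker_eq_bot']
      intro x hx
      obtain ⟨x, rfl⟩ := Ideal.Quotient.mk_surjective x
      rw [hm, LinearMap.mulLeft_apply, ← map_mul, Ideal.Quotient.eq_zero_iff_mem] at hx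
      exact Ideal.Quotient.eq_zero_iff_mem.2 (hreg x hx)
    rw [LinearEquiv.finrank_eq (Submodule.equivMapOfInjective m hinj (quotientPiece 𝒜 I (q - d)))]
    refine congrArg (fun N : Submodule K (S ⧸ I) => Module.finrank K N) (Submodule.ext fun x => ?_)
    constructor
    · rintro ⟨⟨a, ha, rfl⟩, hx⟩
      have haJ : a ∈ I ⊔ Ideal.span {f} := Ideal.Quotient.eq_zero_iff_mem.1 hx
      obtain ⟨h', -⟩ | ⟨-, y, hy, hay⟩ := mem_or_exists_sub_mul_mem_of_mem_sup hI hf ha haJ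
      · omega
      · refine ⟨Ideal.Quotient.mk I y, ⟨y, hy, rfl⟩, ?_⟩
        exact ((Ideal.Quotient.eq.2 hay).trans (map_mul (Ideal.Quotient.mk I) f y)).symm
    · rintro ⟨-, ⟨y, hy, rfl⟩, rfl⟩
      refine ⟨⟨f * y, ?_, map_mul (Ideal.Quotient.mk I) f y⟩, ?_⟩
      · have := SetLike.mul_mem_graded hf hy
        rwa [Nat.add_sub_cancel' h] at this
      · change Ideal.Quotient.factorₐ K hle (Ideal.Quotient.mk I f * Ideal.Quotient.mk I y) = 0
        rw [← map_mul]
        exact Ideal.Quotient.eq_zero_iff_mem.2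
          (Ideal.mul_mem_right _ _ (Ideal.mem_sup_right (Ideal.mem_span_singleton_self f)))
  · suffices hbot : quotientPiece 𝒜 I q ⊓
        LinearMap.ker (Ideal.Quotient.factorₐ K hle).toLinearMap = ⊥ by
      rw [hbot, finrank_bot]
    rw [eq_bot_iff]
    rintro _ ⟨⟨a, ha, rfl⟩, hx⟩
    obtain ⟨-, haI⟩ | ⟨h', -⟩ := mem_or_exists_sub_mul_mem_of_mem_sup hI hf ha
      (Ideal.Quotient.eq_zero_iff_mem.1 hx)
    · exact Ideal.Quotient.eq_zero_iff_mem.2 haI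
    · exact absurd h' h

end GradedQuotient

section RegularTriple

variable {S : Type*} [CommRing S]

/-- `f, g, h` is a (weakly) regular sequence in `S`. -/
structure IsRegularTriple (f g h : S) : Prop where
  eq_zero : ∀ x, f * x = 0 → x = 0
  dvd : ∀ x, f ∣ g * x → f ∣ x
  mem_span : ∀ x, h * x ∈ Ideal.span {f, g} → x ∈ Ideal.span {f, g}

theorem IsRegularTriple.mul {f₁ f₂ g h : S} (h₁ : IsRegularTriple f₁ g h)
    (h₂ : IsRegularTriple f₂ g h) : IsRegularTriple (f₁ * f₂) g h where
  eq_zero x hx := h₂.eq_zero x (h₁.eq_zero _ (by rw [← mul_assoc, hx]))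
  dvd x hx := by
    obtain ⟨y, rfl⟩ := h₁.dvd x ((dvd_mul_right _ _).trans hx)
    obtain ⟨z, hz⟩ := hx
    have : g * y = f₂ * z := by
      rw [← sub_eq_zero]
      exact h₁.eq_zero _ (by linear_combination hz)
    exact mul_dvd_mul_left _ (h₂.dvd y ⟨z, this⟩)
  mem_span x hx := by
    obtain ⟨y, z, hyz⟩ := Ideal.mem_span_pair.1 hx
    obtain ⟨a, c, rfl⟩ := Ideal.mem_span_pair.1
      (h₁.mem_span x (Ideal.mem_span_pair.2 ⟨y * f₂, z, by linear_combination hyz⟩))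
    obtain ⟨e, he⟩ := h₁.dvd (h * c - z) ⟨y * f₂ - h * a, by linear_combination -hyz⟩
    have : h * a = y * f₂ - e * g := by
      rw [← sub_eq_zero]
      exact h₁.eq_zero _ (by linear_combination -hyz - g * he)
    obtain ⟨r, s, rfl⟩ := Ideal.mem_span_pair.1
      (h₂.mem_span a (Ideal.mem_span_pair.2 ⟨y, -e, by linear_combination -this⟩))
    exact Ideal.mem_span_pair.2 ⟨r, s * f₁ + c, by ring⟩

theorem IsRegularTriple.pow_succ {f g h : S} (hf : IsRegularTriple f g h) (n : ℕ) :
    IsRegularTriple (f ^ (n + 1)) g h := by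
  induction n with
  | zero => simpa using hf
  | succ n ih => exact _root_.pow_succ f (n + 1) ▸ ih.mul hf

/-- Regularity of `f, g, h` can be tested after applying an endomorphism which is a retraction
onto a complement of the ideal generated by `f`. -/
theorem IsRegularTriple.of_retraction [IsDomain S] [DecompositionMonoid S] {f g h : S}
    (φ : S →+* S) (hφ : ∀ x, f ∣ x - φ x) (hf : f ≠ 0) (hφf : φ f = 0) (hg : φ g ≠ 0)
    (hgh : IsRelPrime (φ g) (φ h)) : IsRegularTriple f g h where
  eq_zero x hx := (mul_eq_zero.1 hx).resolve_left hf
  dvd x hx := by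
    obtain ⟨y, hy⟩ := hx
    have h0 : φ g * φ x = 0 := by rw [← map_mul, hy, map_mul, hφf, zero_mul]
    have := hφ x
    rwa [(mul_eq_zero.1 h0).resolve_left hg, sub_zero] at this
  mem_span x hx := by
    obtain ⟨y, z, hyz⟩ := Ideal.mem_span_pair.1 hx
    have hdvd : φ g ∣ φ h * φ x := ⟨φ z, by
      rw [← map_mul, ← hyz, map_add, map_mul, map_mul, hφf, mul_zero, zero_add, mul_comm]⟩
    obtain ⟨r, hr⟩ := hgh.dvd_of_dvd_mul_left hdvd
    obtain ⟨a, ha⟩ := hφ x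
    obtain ⟨c, hc⟩ := hφ g
    exact Ideal.mem_span_pair.2 ⟨a - c * r, r, by linear_combination -ha - hr + r * hc⟩

theorem IsRegularTriple.quotientHilbertSeries_span {K : Type*} [Field K] [Algebra K S]
    {𝒜 : ℕ → Submodule K S} [GradedAlgebra 𝒜] [∀ p, Module.Finite K (𝒜 p)] {f g h : S}
    (H : IsRegularTriple f g h) {d e l : ℕ} (hf : f ∈ 𝒜 d) (hg : g ∈ 𝒜 e) (hh : h ∈ 𝒜 l) :
    quotientHilbertSeries 𝒜 (Ideal.span {f, g, h}) =
      (1 - PowerSeries.X ^ d) * (1 - PowerSeries.X ^ e) * (1 - PowerSeries.X ^ l) *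
        quotientHilbertSeries 𝒜 ⊥ := by
  have hf1 : (Ideal.span {f}).IsHomogeneous 𝒜 :=
    Ideal.homogeneous_span 𝒜 _ (by rintro _ rfl; exact ⟨d, hf⟩)
  have hf2 : (Ideal.span {f, g}).IsHomogeneous 𝒜 :=
    Ideal.homogeneous_span 𝒜 _ (by rintro _ (rfl | rfl); exacts [⟨d, hf⟩, ⟨e, hg⟩])
  have e3 : Ideal.span {f, g, h} = Ideal.span {f, g} ⊔ Ideal.span {h} := by
    rw [← Ideal.span_union, Set.insert_union, Set.singleton_union]
  have e2 : Ideal.span {f, g} = Ideal.span {f} ⊔ Ideal.span {g} := Ideal.span_insert _ _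
  have e1 : Ideal.span {f} = ⊥ ⊔ Ideal.span {f} := (bot_sup_eq _).symm
  rw [e3, quotientHilbertSeries_sup_span_singleton hf2 hh H.mem_span, e2,
    quotientHilbertSeries_sup_span_singleton hf1 hg
      (by simpa only [Ideal.mem_span_singleton] using H.dvd), e1,
    quotientHilbertSeries_sup_span_singleton (Ideal.IsHomogeneous.bot 𝒜) hf
      (by simpa only [Ideal.mem_bot] using H.eq_zero)]
  ring

end RegularTriple

instance : GradedAlgebra (weightedHomogeneousSubmodule ℂ w3) :=
  weightedGradedAlgebra ℂ w3

theorem w3_ne_zero (i : Fin 3) : w3 i ≠ 0 := by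
  fin_cases i <;> simp [w3]

instance (p : ℕ) : Module.Finite ℂ (weightedHomogeneousSubmodule ℂ w3 p) :=
  Module.Finite.iff_fg.2 (weightedHomogeneousSubmodule_fg ℂ w3 w3_ne_zero p)

theorem dvd_sub_aeval {f : R3} {a : Fin 3 → R3} (h : ∀ i, f ∣ X i - a i) (x : R3) :
    f ∣ x - aeval a x := by
  rw [← Ideal.mem_span_singleton, ← Ideal.Quotient.eq]
  have : (Ideal.Quotient.mkₐ ℂ (Ideal.span {f})) =
      (Ideal.Quotient.mkₐ ℂ (Ideal.span {f})).comp (aeval a) := by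
    ext i
    simpa using Ideal.Quotient.eq.2 (Ideal.mem_span_singleton.2 (h i))
  exact DFunLike.congr_fun this x

theorem isRegularTriple_X : IsRegularTriple (X 0 : R3) (X 1) (X 2) := by
  refine .of_retraction (aeval ![0, X 1, X 2] : R3 →ₐ[ℂ] R3).toRingHom
    (dvd_sub_aeval fun i => ?_) (X_ne_zero 0) (by simp) (by simp) ?_
  · fin_cases i <;> simp
  · simp only [AlgHom.toRingHom_eq_coe, RingHom.coe_coe, aeval_X]
    refine (X_prime (R := ℂ) (i := (1 : Fin 3))).irreducible.isRelPrime_iff_not_dvd.2 ?_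
    simp [X_dvd_X]

theorem sub_C_constantCoeff_mem_span_X (x : R3) :
    x - C (constantCoeff x) ∈ (Ideal.span {X 0, X 1, X 2} : Ideal R3) := by
  rw [← Ideal.Quotient.eq]
  have : Ideal.Quotient.mkₐ ℂ (Ideal.span {X 0, X 1, X 2} : Ideal R3) =
      (Ideal.Quotient.mkₐ ℂ (Ideal.span {X 0, X 1, X 2} : Ideal R3)).comp
        ((Algebra.ofId ℂ R3).comp (aeval (0 : Fin 3 → ℂ))) := by
    ext i
    have hi : (X i : R3) ∈ Ideal.span {X 0, X 1, X 2} :=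
      Ideal.subset_span (by fin_cases i <;> simp)
    simpa using Ideal.Quotient.eq_zero_iff_mem.2 hi
  have hx := DFunLike.congr_fun this x
  rw [AlgHom.comp_apply, AlgHom.comp_apply, aeval_zero] at hx
  exact hx

theorem one_notMem_span_X : (1 : R3) ∉ (Ideal.span {X 0, X 1, X 2} : Ideal R3) := by
  intro h
  have hle : (Ideal.span {X 0, X 1, X 2} : Ideal R3) ≤ RingHom.ker (constantCoeff (R := ℂ)) := by
    rw [Ideal.span_le]
    rintro _ (rfl | rfl | rfl) <;> simp
  simpa using hle h

theorem quotientHilbertSeries_span_X :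
    quotientHilbertSeries (weightedHomogeneousSubmodule ℂ w3) (Ideal.span {X 0, X 1, X 2}) = 1 := by
  ext p
  rw [quotientHilbertSeries, PowerSeries.coeff_mk, PowerSeries.coeff_one]
  split_ifs with hp
  · subst hp
    have hspan : quotientPiece (weightedHomogeneousSubmodule ℂ w3) (Ideal.span {X 0, X 1, X 2}) 0 =
        Submodule.span ℂ {1} := by
      refine le_antisymm ?_ ?_
      · rintro _ ⟨a, -, rfl⟩
        refine Submodule.mem_span_singleton.2 ⟨constantCoeff a, ?_⟩
        rw [← Algebra.algebraMap_eq_smul_one]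
        exact (Ideal.Quotient.eq.2 (sub_C_constantCoeff_mem_span_X a)).symm
      · rw [Submodule.span_singleton_le_iff_mem]
        exact ⟨1, isWeightedHomogeneous_one ℂ w3, rfl⟩
    rw [hspan, finrank_span_singleton, Nat.cast_one]
    exact fun h => one_notMem_span_X (Ideal.Quotient.eq_zero_iff_mem.1 h)
  · have hbot : quotientPiece (weightedHomogeneousSubmodule ℂ w3)
        (Ideal.span {X 0, X 1, X 2}) p = ⊥ := by
      rw [eq_bot_iff]
      rintro _ ⟨a, ha, rfl⟩
      have h0 : constantCoeff a = 0 :=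
        IsWeightedHomogeneous.coeff_eq_zero ha 0 (by simpa using Ne.symm hp)
      have := sub_C_constantCoeff_mem_span_X a
      rw [h0, C_0, sub_zero] at this
      exact Ideal.Quotient.eq_zero_iff_mem.2 this
    rw [hbot, finrank_bot, Nat.cast_zero]

theorem hilbertSeries_R3 :
    (1 - PowerSeries.X) ^ 2 * (1 - PowerSeries.X ^ 2) *
      quotientHilbertSeries (weightedHomogeneousSubmodule ℂ w3) ⊥ = 1 := by
  have := isRegularTriple_X.quotientHilbertSeries_span (𝒜 := weightedHomogeneousSubmodule ℂ w3)
    (isWeightedHomogeneous_X ℂ w3 0) (isWeightedHomogeneous_X ℂ w3 1)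
    (isWeightedHomogeneous_X ℂ w3 2)
  rw [quotientHilbertSeries_span_X] at this
  have h0 : w3 0 = 1 := rfl
  have h1 : w3 1 = 1 := rfl
  have h2 : w3 2 = 2 := rfl
  rw [h0, h1, h2, pow_one] at this
  rw [sq (1 - PowerSeries.X), ← this]

section Recursion

variable (n : ℕ)

theorem G_succ : G (n + 1) = A3.mulVec (G n) := by
  rw [G, G, pow_succ', Matrix.mulVec_mulVec]

theorem G_zero : G 0 = G1 := by
  simp [G]

theorem G_succ_apply_zero : G (n + 1) 0 = X 0 * G n 0 := by
  simp [G_succ, A3, Matrix.mulVec, dotProduct, Fin.sum_univ_three]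

theorem G_succ_apply_one : G (n + 1) 1 = G n 0 + X 2 * G n 2 := by
  simp [G_succ, A3, Matrix.mulVec, dotProduct, Fin.sum_univ_three]

theorem G_succ_apply_two : G (n + 1) 2 = G n 1 + X 1 * G n 2 := by
  simp [G_succ, A3, Matrix.mulVec, dotProduct, Fin.sum_univ_three]

theorem G_apply_zero : G n 0 = X 0 ^ (n + 1) * (2 * X 0 - X 1) := by
  induction n with
  | zero => simp [G_zero, G1]
  | succ n ih => rw [G_succ_apply_zero, ih]; ring

theorem isWeightedHomogeneous_G :
    IsWeightedHomogeneous w3 (G n 0) (n + 2) ∧ IsWeightedHomogeneous w3 (G n 1) (n + 1) ∧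
      IsWeightedHomogeneous w3 (G n 2) n := by
  have hb : IsWeightedHomogeneous w3 (X 0 : R3) 1 := isWeightedHomogeneous_X ℂ w3 0
  have ht : IsWeightedHomogeneous w3 (X 1 : R3) 1 := isWeightedHomogeneous_X ℂ w3 1
  have hk : IsWeightedHomogeneous w3 (X 2 : R3) 2 := isWeightedHomogeneous_X ℂ w3 2
  have h2 : IsWeightedHomogeneous w3 (2 : R3) 0 := isWeightedHomogeneous_C w3 (2 : ℂ)
  induction n with
  | zero =>
    have hl : IsWeightedHomogeneous w3 (2 * X 0 - X 1 : R3) 1 := by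
      simpa using (h2.mul hb).sub ht
    exact G_zero ▸ ⟨hb.mul hl, hl, h2⟩
  | succ n ih =>
    obtain ⟨hu, hv, hw⟩ := ih
    rw [G_succ_apply_zero, G_succ_apply_one, G_succ_apply_two]
    refine ⟨?_, ?_, ?_⟩
    · simpa [add_comm, add_left_comm] using hb.mul hu
    · refine IsWeightedHomogeneous.add hu ?_
      simpa [add_comm, add_left_comm] using hk.mul hw
    · refine IsWeightedHomogeneous.add hv ?_
      simpa [add_comm, add_left_comm] using ht.mul hw

end Recursion

/-- The components `v, w` stay coprime along the recursion after a substitution that fixes `k` and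
kills `u`, provided that `k` never divides the image of `w`. -/
theorem isRelPrime_aeval_G {a : Fin 3 → R3} (ha : a 2 = X 2) (hu : ∀ n, aeval a (G n 0) = 0)
    (hw : ∀ n, ¬ (X 2 : R3) ∣ aeval a (G n 2)) (n : ℕ) :
    IsRelPrime (aeval a (G n 1)) (aeval a (G n 2)) := by
  induction n with
  | zero =>
    have : IsUnit (aeval a (G 0 2)) := by
      have h2 : IsUnit (C (2 : ℂ) : R3) := (isUnit_iff_ne_zero.2 two_ne_zero).map C
      rw [G_zero]
      exact h2.map (aeval a)
    exact this.isRelPrime_right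
  | succ n ih =>
    rw [G_succ_apply_one, map_add, hu, zero_add, map_mul, aeval_X, ha]
    refine IsRelPrime.mul_left ?_ ?_
    · exact X_prime.irreducible.isRelPrime_iff_not_dvd.2 (hw (n + 1))
    · rw [G_succ_apply_two, map_add, map_mul]
      intro c hc hc'
      exact ih ((dvd_add_left (hc.mul_left _)).1 hc') hc

theorem isRegularTriple_of_aeval_G {f : R3} (hf : f ≠ 0) {a : Fin 3 → R3} (ha : a 2 = X 2)
    (haf : aeval a f = 0) (hdvd : ∀ i, f ∣ X i - a i) (hu : ∀ n, f ∣ G n 0) {c : Fin 3 → ℂ}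
    (hc : c 2 = 0) (hw : ∀ n, aeval c (aeval a (G n 2)) ≠ 0) (n : ℕ) :
    IsRegularTriple f (G (n + 1) 1) (G (n + 1) 2) := by
  have hu' (n : ℕ) : aeval a (G n 0) = 0 := by
    obtain ⟨y, hy⟩ := hu n
    rw [hy, map_mul, haf, zero_mul]
  have hw' (n : ℕ) : ¬ (X 2 : R3) ∣ aeval a (G n 2) := by
    rintro ⟨y, hy⟩
    exact hw n (by rw [hy, map_mul, aeval_X, hc, zero_mul])
  refine .of_retraction (aeval a).toRingHom (dvd_sub_aeval hdvd) hf haf ?_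
    (isRelPrime_aeval_G ha hu' hw' (n + 1))
  change aeval a (G (n + 1) 1) ≠ 0
  rw [G_succ_apply_one, map_add, hu', zero_add, map_mul, aeval_X, ha]
  exact mul_ne_zero (X_ne_zero 2) fun h => hw' n (h ▸ dvd_zero _)

theorem isRegularTriple_X_zero_G (n : ℕ) :
    IsRegularTriple (X 0) (G (n + 1) 1) (G (n + 1) 2) := by
  refine isRegularTriple_of_aeval_G (X_ne_zero 0) (a := ![0, X 1, X 2]) (c := ![0, 1, 0]) rfl
    (by simp) (fun i => by fin_cases i <;> simp)
    (fun n => G_apply_zero n ▸ (dvd_pow_self _ n.succ_ne_zero).mul_right _) rfl (fun n => ?_) n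
  set ψ : R3 →ₐ[ℂ] ℂ := (aeval ![0, 1, 0]).comp (aeval ![0, X 1, X 2]) with hψ
  have h0 : ψ (X 0) = 0 := by simp [hψ]
  have h1 : ψ (X 1) = 1 := by simp [hψ]
  have h2 : ψ (X 2) = 0 := by simp [hψ]
  have key (n : ℕ) : ψ (G (n + 1) 1) = 0 ∧ ψ (G (n + 1) 2) = 1 := by
    induction n with
    | zero =>
      rw [G_succ_apply_one, G_succ_apply_two, G_zero]
      simp only [G1, Matrix.cons_val, map_add, map_sub, map_mul, map_ofNat, h0, h1, h2]
      norm_num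
    | succ n ih =>
      rw [G_succ_apply_one (n + 1), G_succ_apply_two (n + 1), G_apply_zero]
      simp only [map_add, map_mul, map_pow, ih.1, ih.2, h0, h1, h2]
      simp
  change ψ (G n 2) ≠ 0
  cases n with
  | zero => simp [G_zero, G1, map_ofNat]
  | succ n => simp [key]

theorem isRegularTriple_two_mul_X_sub_G (n : ℕ) :
    IsRegularTriple (2 * X 0 - X 1) (G (n + 1) 1) (G (n + 1) 2) := by
  refine isRegularTriple_of_aeval_G ?_ (a := ![X 0, 2 * X 0, X 2]) (c := ![1, 0, 0]) rfl
    ?_ (fun i => ?_) (fun n => G_apply_zero n ▸ dvd_mul_left _ _) rfl (fun n => ?_) n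
  · intro h
    have := congrArg (aeval ![(0 : ℂ), 1, 0]) h
    simp at this
  · rw [map_sub, map_mul, map_ofNat]
    simp
  · fin_cases i
    · simp
    · exact ⟨-1, by simp⟩
    · simp
  set ψ : R3 →ₐ[ℂ] ℂ := (aeval ![1, 0, 0]).comp (aeval ![X 0, 2 * X 0, X 2]) with hψ
  have h0 : ψ (X 0) = 1 := by simp [hψ]
  have h1 : ψ (X 1) = 2 := by
    rw [hψ, AlgHom.comp_apply, aeval_X]
    change aeval _ (2 * X 0) = _
    rw [map_mul, map_ofNat]
    simp
  have h2 : ψ (X 2) = 0 := by simp [hψ]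
  have key (n : ℕ) : ψ (G n 1) = 0 ∧ ψ (G n 2) = 2 * 2 ^ n := by
    induction n with
    | zero =>
      rw [G_zero]
      simp only [G1, Matrix.cons_val, map_sub, map_mul, map_ofNat, h0, h1]
      norm_num
    | succ n ih =>
      rw [G_succ_apply_one, G_succ_apply_two, G_apply_zero]
      simp only [map_add, map_sub, map_mul, map_pow, map_ofNat, ih.1, ih.2, h0, h1, h2]
      exact ⟨by ring, by ring⟩
  change ψ (G n 2) ≠ 0
  simp [key]

/-- With the grading `deg b = deg t = 1`, `deg k = 2`, the polynomials
`u_{n+1}, v_{n+1}, w_{n+1}` are homogeneous of degrees `n+2`, `n+1`, `n` respectively,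
and for every `n ≥ 1` the Hilbert series of the graded quotient satisfies
`(1−T)²(1−T²) · Σ_p dim_ℂ (ℂ[b,t,k]/(u_{n+1},v_{n+1},w_{n+1}))_p · T^p
  = (1−Tⁿ)(1−T^{n+1})(1−T^{n+2})` in `ℤ[[T]]`. -/
theorem stmt13 (n : ℕ) (hn : 1 ≤ n) :
    (IsWeightedHomogeneous w3 (G n 0) (n + 2) ∧
      IsWeightedHomogeneous w3 (G n 1) (n + 1) ∧
      IsWeightedHomogeneous w3 (G n 2) n) ∧
    (1 - PowerSeries.X) ^ 2 * (1 - PowerSeries.X ^ 2) *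
        PowerSeries.mk (fun p => (Module.finrank ℂ (comp3 n p) : ℤ)) =
      (1 - PowerSeries.X ^ n) * (1 - PowerSeries.X ^ (n + 1))
        * (1 - PowerSeries.X ^ (n + 2)) := by
  refine ⟨isWeightedHomogeneous_G n, ?_⟩
  obtain ⟨m, rfl⟩ := Nat.exists_eq_add_of_le' hn
  obtain ⟨hu, hv, hw⟩ := isWeightedHomogeneous_G (m + 1)
  have hreg : IsRegularTriple (G (m + 1) 0) (G (m + 1) 1) (G (m + 1) 2) := by
    rw [G_apply_zero]
    exact ((isRegularTriple_X_zero_G m).pow_succ (m + 1)).mul (isRegularTriple_two_mul_X_sub_G m)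
  have key := hreg.quotientHilbertSeries_span (𝒜 := weightedHomogeneousSubmodule ℂ w3) hu hv hw
  have hcomp : PowerSeries.mk (fun p => (Module.finrank ℂ (comp3 (m + 1) p) : ℤ)) =
    quotientHilbertSeries (weightedHomogeneousSubmodule ℂ w3)
      (Ideal.span {G (m + 1) 0, G (m + 1) 1, G (m + 1) 2}) := rfl
  rw [hcomp, key, mul_left_comm, hilbertSeries_R3, mul_one]
  ring

end
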